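/- There exists a constant C > 0, independent of p and q, such that for every integer p ≥ 2, every integer q with 0 ≤ q ≤ p−1, and every polynomial u ∈ P_p, the projector π_q satisfies ‖u − π_q u‖_{L²(−1,1)} ≤ C (q+1)^{−1} ‖(I u)'‖_{L²(−1,1)}. -/

import Mathlib

open Polynomial

/-- The `k`-th Legendre polynomial (Rodrigues' formula), normalized so that `L_k(1) = 1`
and `∫_{−1}^{1} L_k L_j ds = 2δ_{kj}/(2k+1)`. -/
noncomputable def legendre (k : ℕ) : Polynomial ℝ :=
  ((2 ^ k * (Nat.factorial k) : ℝ))⁻¹ •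
    ((fun q => Polynomial.derivative q)^[k] ((Polynomial.X ^ 2 - 1) ^ k))

/-- The reconstruction operator `I : P_p → P_{p+1}`,
`I v := v − v(−1)·(−1)^p (L_p − L_{p+1})/2`. -/
noncomputable def recon (p : ℕ) (v : Polynomial ℝ) : Polynomial ℝ :=
  v - (v.eval (-1) * (-1 : ℝ) ^ p / 2) • (legendre p - legendre (p + 1))

/-- The basis polynomials `ψ_0 := (L_1 + L_0)/√2`,
`ψ_k := (L_{k+1} − L_{k−1})/√(4k+2)` for `1 ≤ k ≤ p−1`, and
`ψ_p := (L_p − L_{p−1})/√(4p+2)`. -/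
noncomputable def psi (p k : ℕ) : Polynomial ℝ :=
  if k = 0 then (Real.sqrt 2)⁻¹ • (legendre 1 + legendre 0)
  else if k = p then (Real.sqrt (4 * (p : ℝ) + 2))⁻¹ • (legendre p - legendre (p - 1))
  else (Real.sqrt (4 * (k : ℝ) + 2))⁻¹ • (legendre (k + 1) - legendre (k - 1))

/-!
`I` turns `ψ_j` into the antiderivative of a normalized Legendre polynomial: for `j ≥ 1`,
`I ψ_j = (L_{j+1} - L_{j-1}) / √(4j+2)`, and `L_{j+1}' - L_{j-1}' = (2j+1) L_j`. Hence
`‖(I u)'‖² = ∑ c_j²` for `u = ∑ c_j ψ_j`. On the other hand `u - π_q u = ∑_{j > q} c_j ψ_j` only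
involves Legendre polynomials of degree at least `q`, and both the weight `1 / √(4j+2)` and the
norm `‖L_m‖ = √(2 / (2m+1))` are `O((q+1)^{-1/2})`. Since only `ψ_{p-1}` and `ψ_p` share their
leading Legendre polynomial, the tail splits into three sums, each of pairwise orthogonal terms,
which yields `C = 3`.
-/

open MeasureTheory
open scoped RealInnerProductSpace

section RodriguesPolynomial

variable {R : Type*} [CommRing R]

lemma eval_iterate_derivative_pow_eq_zero {f : R[X]} {x : R} (hx : f.eval x = 0) {i k : ℕ}
    (hik : i < k) : (derivative^[i] (f ^ k)).eval x = 0 := by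
  obtain ⟨g, hg⟩ : f ∣ derivative^[i] (f ^ k) :=
    (dvd_pow_self f (Nat.sub_ne_zero_of_lt hik)).trans (pow_sub_dvd_iterate_derivative_pow f k i)
  rw [hg, eval_mul, hx, zero_mul]

lemma derivative_X_sq_sub_one_pow_succ (k : ℕ) :
    derivative ((X ^ 2 - 1 : R[X]) ^ (k + 1)) = (2 * (k + 1) : R) • ((X ^ 2 - 1) ^ k * X) := by
  have hderiv : derivative (X ^ 2 - 1 : R[X]) = 2 * X := by simp [map_ofNat, one_add_one_eq_two]
  rw [derivative_pow_succ, hderiv]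
  simp only [smul_eq_C_mul, map_mul, map_add, map_ofNat, map_natCast, map_one]
  ring

lemma derivative_derivative_X_sq_sub_one_pow (k : ℕ) :
    derivative (derivative ((X ^ 2 - 1 : R[X]) ^ (k + 2))) =
      (2 * (k + 2) * (2 * k + 3) : R) • (X ^ 2 - 1) ^ (k + 1) +
        (4 * (k + 1) * (k + 2) : R) • (X ^ 2 - 1) ^ k := by
  rw [derivative_X_sq_sub_one_pow_succ, derivative_smul, derivative_mul,
    derivative_X_sq_sub_one_pow_succ]
  simp only [derivative_X, smul_eq_C_mul, map_mul, map_add, map_ofNat, map_natCast, map_one,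
    Nat.cast_add, Nat.cast_one]
  ring

end RodriguesPolynomial

section Legendre

lemma legendre_eq_smul_iterate_derivative (k : ℕ) :
    legendre k = ((2 ^ k * k.factorial : ℝ))⁻¹ • derivative^[k] ((X ^ 2 - 1) ^ k) := rfl

lemma legendre_zero : legendre 0 = 1 := by simp [legendre_eq_smul_iterate_derivative]

lemma legendre_one : legendre 1 = X := by
  rw [legendre_eq_smul_iterate_derivative, Function.iterate_one, derivative_X_sq_sub_one_pow_succ]
  simp

lemma natDegree_legendre_le (k : ℕ) : (legendre k).natDegree ≤ k := by
  have hpow : ((X ^ 2 - 1 : ℝ[X]) ^ k).natDegree ≤ k * 2 :=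
    natDegree_pow_le_of_le k (by compute_degree)
  calc (legendre k).natDegree
      ≤ (derivative^[k] ((X ^ 2 - 1 : ℝ[X]) ^ k)).natDegree := natDegree_smul_le _ _
    _ ≤ ((X ^ 2 - 1 : ℝ[X]) ^ k).natDegree - k := natDegree_iterate_derivative _ _
    _ ≤ k := by omega

lemma natDegree_derivative_legendre_le (k : ℕ) : (derivative (legendre k)).natDegree ≤ k :=
  (natDegree_derivative_le _).trans ((Nat.sub_le _ _).trans (natDegree_legendre_le k))

lemma eval_legendre_of_sq_eq_one {x : ℝ} (hx : x ^ 2 = 1) (k : ℕ) :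
    (legendre k).eval x = x ^ k := by
  induction k with
  | zero => simp [legendre_zero]
  | succ k ih =>
    have hvanish : (k : ℝ) * (derivative^[k - 1] ((X ^ 2 - 1 : ℝ[X]) ^ k)).eval x = 0 := by
      rcases Nat.eq_zero_or_pos k with rfl | hk
      · simp
      · rw [eval_iterate_derivative_pow_eq_zero (by simp [hx]) (Nat.sub_lt hk one_pos), mul_zero]
    rw [legendre_eq_smul_iterate_derivative] at ih ⊢
    rw [Function.iterate_succ_apply, derivative_X_sq_sub_one_pow_succ, iterate_derivative_smul,
      iterate_derivative_mul_X]
    simp only [eval_smul, eval_add, eval_mul, eval_X, smul_eq_mul, nsmul_eq_mul,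
      eval_natCast] at ih ⊢
    rw [hvanish, pow_succ x, ← ih, Nat.factorial_succ]
    push_cast
    field_simp
    ring

lemma derivative_legendre_add_two_sub (k : ℕ) :
    derivative (legendre (k + 2) - legendre k) = (2 * k + 3 : ℝ) • legendre (k + 1) := by
  have hcancel : ((2 ^ (k + 2) * (k + 2).factorial : ℝ))⁻¹ * (4 * (k + 1) * (k + 2)) =
      ((2 ^ k * k.factorial : ℝ))⁻¹ := by
    simp only [Nat.factorial_succ]
    push_cast
    field_simp
    ring
  have hcoeff : ((2 ^ (k + 2) * (k + 2).factorial : ℝ))⁻¹ * (2 * (k + 2) * (2 * k + 3)) =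
      (2 * k + 3) * ((2 ^ (k + 1) * (k + 1).factorial : ℝ))⁻¹ := by
    simp only [Nat.factorial_succ]
    push_cast
    field_simp
    ring
  simp only [derivative_sub, legendre_eq_smul_iterate_derivative, derivative_smul]
  rw [← Function.iterate_succ_apply' derivative, ← Function.iterate_succ_apply' derivative,
    Function.iterate_succ_apply, Function.iterate_succ_apply (n := k + 1),
    derivative_derivative_X_sq_sub_one_pow, iterate_map_add, iterate_derivative_smul,
    iterate_derivative_smul, smul_add, smul_smul, smul_smul, smul_smul, hcancel, hcoeff,
    add_sub_cancel_right]

end Legendre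

section L2

instance isFiniteMeasure_comap_coe_Icc (a b : ℝ) :
    IsFiniteMeasure (volume.comap ((↑) : Set.Icc a b → ℝ)) :=
  have := IsFiniteMeasureOnCompacts.comap' volume continuous_subtype_val
    (MeasurableEmbedding.subtype_coe (measurableSet_Icc (a := a) (b := b)))
  CompactSpace.isFiniteMeasure

/-- A real polynomial, viewed as an element of `L²(-1, 1)`. The interval is encoded as the closed
interval `[-1, 1]`, whose compactness makes every polynomial square integrable. -/
noncomputable def toL2 : ℝ[X] →ₗ[ℝ] Lp ℝ 2 (volume.comap ((↑) : Set.Icc (-1 : ℝ) 1 → ℝ)) :=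
  (ContinuousMap.toLp 2 _ ℝ).toLinearMap ∘ₗ
    (toContinuousMapOnAlgHom (Set.Icc (-1 : ℝ) 1)).toLinearMap

lemma inner_toL2 (f g : ℝ[X]) : ⟪toL2 f, toL2 g⟫ = ∫ s in (-1 : ℝ)..1, f.eval s * g.eval s := by
  rw [intervalIntegral.integral_of_le (by norm_num), ← integral_Icc_eq_integral_Ioc,
    ← integral_subtype_comap measurableSet_Icc]
  refine (ContinuousMap.inner_toLp _ _ _).trans (integral_congr_ae (.of_forall fun s => ?_))
  simp [mul_comm]

lemma norm_toL2 (f : ℝ[X]) : ‖toL2 f‖ = √(∫ s in (-1 : ℝ)..1, f.eval s ^ 2) := by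
  simp only [norm_eq_sqrt_real_inner, inner_toL2, sq]

lemma inner_toL2_derivative_left (f g : ℝ[X]) :
    ⟪toL2 (derivative f), toL2 g⟫ =
      f.eval 1 * g.eval 1 - f.eval (-1) * g.eval (-1) - ⟪toL2 f, toL2 (derivative g)⟫ := by
  have hparts := intervalIntegral.integral_mul_deriv_eq_deriv_mul (a := -1) (b := 1)
    (fun x _ => f.hasDerivAt x) (fun x _ => g.hasDerivAt x)
    ((derivative f).continuous.intervalIntegrable _ _)
    ((derivative g).continuous.intervalIntegrable _ _)
  rw [inner_toL2, inner_toL2, hparts, sub_sub_cancel]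

lemma inner_toL2_iterate_derivative_left {w : ℝ[X]} {n : ℕ}
    (hw : ∀ i < n, ∀ x : ℝ, x ^ 2 = 1 → (derivative^[i] w).eval x = 0) (f : ℝ[X]) :
    ⟪toL2 (derivative^[n] w), toL2 f⟫ = (-1) ^ n * ⟪toL2 w, toL2 (derivative^[n] f)⟫ := by
  induction n generalizing f with
  | zero => simp
  | succ n ih =>
    rw [Function.iterate_succ_apply', inner_toL2_derivative_left, hw n n.lt_succ_self 1 (by simp),
      hw n n.lt_succ_self (-1) (by simp), ih fun i hi => hw i (hi.trans n.lt_succ_self),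
      Function.iterate_succ_apply]
    ring

lemma inner_toL2_legendre_eq_zero {k : ℕ} {f : ℝ[X]} (hf : f.natDegree < k) :
    ⟪toL2 (legendre k), toL2 f⟫ = 0 := by
  rw [legendre_eq_smul_iterate_derivative, map_smul, real_inner_smul_left,
    inner_toL2_iterate_derivative_left
      fun i hi x hx => eval_iterate_derivative_pow_eq_zero (by simp [hx]) hi,
    iterate_derivative_eq_zero hf, map_zero, inner_zero_right, mul_zero, mul_zero]

lemma inner_toL2_legendre_of_ne {j k : ℕ} (hjk : j ≠ k) :
    ⟪toL2 (legendre j), toL2 (legendre k)⟫ = 0 := by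
  rcases hjk.lt_or_gt with h | h
  · rw [real_inner_comm]
    exact inner_toL2_legendre_eq_zero ((natDegree_legendre_le j).trans_lt h)
  · exact inner_toL2_legendre_eq_zero ((natDegree_legendre_le k).trans_lt h)

lemma inner_toL2_legendre_self (k : ℕ) :
    ⟪toL2 (legendre k), toL2 (legendre k)⟫ = 2 / (2 * k + 1) := by
  rcases k with _ | k
  · rw [legendre_zero, inner_toL2]
    norm_num
  have hderiv : derivative (legendre (k + 2)) =
      (2 * k + 3 : ℝ) • legendre (k + 1) + derivative (legendre k) := by
    rw [← derivative_legendre_add_two_sub, derivative_sub, sub_add_cancel]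
  have hboundary : (legendre (k + 2)).eval 1 * (legendre (k + 1)).eval 1 -
      (legendre (k + 2)).eval (-1) * (legendre (k + 1)).eval (-1) = 2 := by
    have hodd : Odd (k + 2 + (k + 1)) := ⟨k + 1, by ring⟩
    simp only [eval_legendre_of_sq_eq_one (one_pow 2), eval_legendre_of_sq_eq_one neg_one_sq,
      ← pow_add, one_pow, hodd.neg_one_pow]
    norm_num
  have hlow : ⟪toL2 (derivative (legendre k)), toL2 (legendre (k + 1))⟫ = 0 := by
    rw [real_inner_comm]
    exact inner_toL2_legendre_eq_zero (Nat.lt_succ_of_le (natDegree_derivative_legendre_le k))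
  have hhigh : ⟪toL2 (legendre (k + 2)), toL2 (derivative (legendre (k + 1)))⟫ = 0 :=
    inner_toL2_legendre_eq_zero (Nat.lt_succ_of_le (natDegree_derivative_legendre_le (k + 1)))
  have hparts := inner_toL2_derivative_left (legendre (k + 2)) (legendre (k + 1))
  rw [hboundary, hhigh, hderiv, map_add, map_smul, inner_add_left, real_inner_smul_left, hlow]
    at hparts
  push_cast
  rw [eq_div_iff (by positivity)]
  linarith

lemma norm_sq_sum_smul_toL2_legendre {ι : Type*} {s : Finset ι} {m : ι → ℕ}
    (hm : Set.InjOn m s) (a : ι → ℝ) :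
    ‖∑ i ∈ s, a i • toL2 (legendre (m i))‖ ^ 2 = ∑ i ∈ s, a i ^ 2 * (2 / (2 * m i + 1)) := by
  rw [← real_inner_self_eq_norm_sq, sum_inner]
  refine Finset.sum_congr rfl fun i hi => ?_
  rw [inner_sum, Finset.sum_eq_single_of_mem i hi]
  · rw [real_inner_smul_left, real_inner_smul_right, inner_toL2_legendre_self]
    ring
  · intro j hj hji
    rw [real_inner_smul_left, real_inner_smul_right,
      inner_toL2_legendre_of_ne fun h => hji (hm hj hi h.symm), mul_zero, mul_zero]

end L2

section Reconstruction

lemma isLinearMap_recon (p : ℕ) : IsLinearMap ℝ (recon p) where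
  map_add f g := by
    simp only [recon, eval_add, add_mul, add_div, add_smul]
    abel
  map_smul a f := by
    simp only [recon, eval_smul, smul_eq_mul, smul_sub, smul_smul, mul_assoc, mul_div_assoc]

lemma recon_of_eval_neg_one_eq_zero {p : ℕ} {f : ℝ[X]} (hf : f.eval (-1) = 0) :
    recon p f = f := by
  simp [recon, hf]

lemma recon_legendre_succ_sub (k : ℕ) :
    recon (k + 1) (legendre (k + 1) - legendre k) = legendre (k + 2) - legendre k := by
  have hcoeff : ((-1 : ℝ) ^ (k + 1) - (-1) ^ k) * (-1) ^ (k + 1) / 2 = 1 := by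
    rcases neg_one_pow_eq_or ℝ k with h | h <;> norm_num [pow_succ, h]
  rw [recon, eval_sub, eval_legendre_of_sq_eq_one neg_one_sq,
    eval_legendre_of_sq_eq_one neg_one_sq, hcoeff, one_smul]
  abel

lemma psi_of_pos (p : ℕ) {j : ℕ} (hj : 0 < j) :
    psi p j = (√(4 * j + 2))⁻¹ • (legendre (if j = p then p else j + 1) - legendre (j - 1)) := by
  rw [psi, if_neg hj.ne']
  split_ifs with h
  · rw [h]
  · rfl

lemma recon_psi_succ (p k : ℕ) :
    recon p (psi p (k + 1)) =
      (√(4 * (k + 1 : ℕ) + 2))⁻¹ • (legendre (k + 2) - legendre k) := by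
  rw [psi_of_pos p (Nat.add_one_pos k), (isLinearMap_recon p).map_smul, Nat.add_sub_cancel]
  split_ifs with h
  · rw [← h, recon_legendre_succ_sub]
  · rw [recon_of_eval_neg_one_eq_zero]
    simp [eval_legendre_of_sq_eq_one neg_one_sq, pow_succ]

lemma derivative_recon_psi (p j : ℕ) :
    derivative (recon p (psi p j)) = (√(4 * j + 2) / 2) • legendre j := by
  have hsqrt : (√(4 * j + 2 : ℝ))⁻¹ * (2 * j + 1) = √(4 * j + 2) / 2 := by
    have hsq := Real.sq_sqrt (show (0 : ℝ) ≤ 4 * j + 2 by positivity)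
    field_simp
    linarith
  rw [← hsqrt]
  rcases j with _ | k
  · rw [recon_of_eval_neg_one_eq_zero (by simp [psi, legendre_one, legendre_zero])]
    simp [psi, legendre_one, legendre_zero]
  · rw [recon_psi_succ, derivative_smul, derivative_legendre_add_two_sub, smul_smul]
    push_cast
    ring_nf

end Reconstruction

section Estimate

variable {ι : Type*} {s : Finset ι} {n : ι → ℕ}

lemma norm_toL2_derivative_recon_sum_smul_psi (p : ℕ) (hn : Set.InjOn n s) (c : ι → ℝ) :
    ‖toL2 (derivative (recon p (∑ i ∈ s, c i • psi p (n i))))‖ = √(∑ i ∈ s, c i ^ 2) := by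
  have hexpand : toL2 (derivative (recon p (∑ i ∈ s, c i • psi p (n i)))) =
      ∑ i ∈ s, (c i * (√(4 * n i + 2) / 2)) • toL2 (legendre (n i)) := by
    rw [← (isLinearMap_recon p).mk'_apply]
    simp only [map_sum, map_smul, IsLinearMap.mk'_apply, derivative_recon_psi, smul_smul]
  rw [hexpand, ← Real.sqrt_sq (norm_nonneg _), norm_sq_sum_smul_toL2_legendre hn]
  congr 1
  refine Finset.sum_congr rfl fun i _ => ?_
  rw [mul_pow, div_pow, Real.sq_sqrt (by positivity)]
  field_simp
  ring

lemma norm_sum_smul_toL2_legendre_le {m : ι → ℕ} (hm : Set.InjOn m s) {q : ℕ}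
    (hqn : ∀ i ∈ s, q ≤ n i) (hqm : ∀ i ∈ s, q ≤ m i) (c : ι → ℝ) :
    ‖∑ i ∈ s, (c i * (√(4 * n i + 2))⁻¹) • toL2 (legendre (m i))‖ ≤
      √(∑ i ∈ s, c i ^ 2) / (q + 1) := by
  rw [← sq_le_sq₀ (norm_nonneg _) (by positivity), norm_sq_sum_smul_toL2_legendre hm, div_pow,
    Real.sq_sqrt (by positivity), Finset.sum_div]
  refine Finset.sum_le_sum fun i hi => ?_
  have hqni : (q + 1 : ℝ) ≤ 2 * n i + 1 := by exact_mod_cast (by linarith [hqn i hi])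
  have hqmi : (q + 1 : ℝ) ≤ 2 * m i + 1 := by exact_mod_cast (by linarith [hqm i hi])
  calc (c i * (√(4 * n i + 2))⁻¹) ^ 2 * (2 / (2 * m i + 1))
      = c i ^ 2 / ((2 * n i + 1) * (2 * m i + 1)) := by
        rw [mul_pow, inv_pow, Real.sq_sqrt (by positivity)]
        field_simp
        ring
    _ ≤ c i ^ 2 / (q + 1) ^ 2 := by
        rw [sq (q + 1 : ℝ)]
        gcongr

lemma toL2_sum_smul_psi (p : ℕ) (hn : ∀ i ∈ s, 0 < n i) (c : ι → ℝ) :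
    toL2 (∑ i ∈ s, c i • psi p (n i)) =
      (∑ i ∈ s with n i = p, (c i * (√(4 * n i + 2))⁻¹) • toL2 (legendre (n i))) +
        (∑ i ∈ s with n i ≠ p, (c i * (√(4 * n i + 2))⁻¹) • toL2 (legendre (n i + 1))) -
        ∑ i ∈ s, (c i * (√(4 * n i + 2))⁻¹) • toL2 (legendre (n i - 1)) := by
  rw [Finset.sum_filter, Finset.sum_filter, ← Finset.sum_add_distrib, ← Finset.sum_sub_distrib,
    map_sum]
  refine Finset.sum_congr rfl fun i hi => ?_
  rw [map_smul, psi_of_pos p (hn i hi), map_smul, map_sub, smul_smul, smul_sub]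
  by_cases h : n i = p <;> simp [h]

lemma norm_toL2_sum_smul_psi_le (p : ℕ) {q : ℕ} (hn : Set.InjOn n s) (hq : ∀ i ∈ s, q < n i)
    (c : ι → ℝ) :
    ‖toL2 (∑ i ∈ s, c i • psi p (n i))‖ ≤ 3 / (q + 1) * √(∑ i ∈ s, c i ^ 2) := by
  set B := √(∑ i ∈ s, c i ^ 2) / (q + 1) with hB
  have hpiece {t : Finset ι} {m : ι → ℕ} (hts : t ⊆ s) (hm : Set.InjOn m t)
      (hqm : ∀ i ∈ t, q ≤ m i) :
      ‖∑ i ∈ t, (c i * (√(4 * n i + 2))⁻¹) • toL2 (legendre (m i))‖ ≤ B := by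
    refine (norm_sum_smul_toL2_legendre_le hm (fun i hi => (hq i (hts hi)).le) hqm c).trans ?_
    rw [hB]
    gcongr
  have htop : ‖∑ i ∈ s with n i = p, (c i * (√(4 * n i + 2))⁻¹) • toL2 (legendre (n i))‖ ≤ B :=
    hpiece (Finset.filter_subset _ s) (hn.mono (Finset.filter_subset _ s))
      fun i hi => (hq i (Finset.mem_of_mem_filter i hi)).le
  have hupper :
      ‖∑ i ∈ s with n i ≠ p, (c i * (√(4 * n i + 2))⁻¹) • toL2 (legendre (n i + 1))‖ ≤ B :=
    hpiece (Finset.filter_subset _ s)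
      (Nat.succ_injective.comp_injOn (hn.mono (Finset.filter_subset _ s)))
      fun i hi => (hq i (Finset.mem_of_mem_filter i hi)).le.trans (Nat.le_succ _)
  have hlower : ‖∑ i ∈ s, (c i * (√(4 * n i + 2))⁻¹) • toL2 (legendre (n i - 1))‖ ≤ B :=
    hpiece subset_rfl
      (fun i hi j hj hij => hn hi hj <|
        Nat.pred_inj (Nat.zero_lt_of_lt (hq i hi)) (Nat.zero_lt_of_lt (hq j hj)) hij)
      fun i hi => Nat.le_sub_one_of_lt (hq i hi)
  rw [toL2_sum_smul_psi p fun i hi => Nat.zero_lt_of_lt (hq i hi)]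
  calc _ ≤ B + B + B := (norm_sub_le _ _).trans
        (add_le_add ((norm_add_le _ _).trans (add_le_add htop hupper)) hlower)
    _ = 3 / (q + 1) * √(∑ i ∈ s, c i ^ 2) := by
        rw [hB]
        ring

end Estimate

/-- **A priori estimate for the projector `π_q`.** There is a constant `C > 0`, independent
of `p` and `q`, such that for every `p ≥ 2`, every `0 ≤ q ≤ p−1` and every `u ∈ P_p` written
as `u = Σ_{j=0}^p c_j ψ_j`, the projector `π_q u := Σ_{j=0}^q c_j ψ_j` satisfies
`‖u − π_q u‖_{L²(−1,1)} ≤ C (q+1)⁻¹ ‖(I u)'‖_{L²(−1,1)}`. -/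
theorem projector_estimate :
    ∃ C : ℝ, 0 < C ∧ ∀ p : ℕ, 2 ≤ p → ∀ q : ℕ, q ≤ p - 1 → ∀ c : Fin (p + 1) → ℝ,
      Real.sqrt (∫ s in (-1 : ℝ)..1,
          (((∑ j : Fin (p + 1), c j • psi p (j : ℕ)) -
              ∑ j ∈ Finset.univ.filter (fun j : Fin (p + 1) => (j : ℕ) ≤ q),
                c j • psi p (j : ℕ)).eval s) ^ 2)
        ≤ C / ((q : ℝ) + 1) *
          Real.sqrt (∫ s in (-1 : ℝ)..1,
            ((Polynomial.derivative (recon p (∑ j : Fin (p + 1), c j • psi p (j : ℕ)))).eval s) ^ 2) := by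
  refine ⟨3, by norm_num, fun p _ q _ c => ?_⟩
  set tail := Finset.univ.filter fun j : Fin (p + 1) => ¬ (j : ℕ) ≤ q
  have htail : (∑ j : Fin (p + 1), c j • psi p (j : ℕ)) -
      ∑ j ∈ Finset.univ.filter (fun j : Fin (p + 1) => (j : ℕ) ≤ q), c j • psi p (j : ℕ) =
        ∑ j ∈ tail, c j • psi p (j : ℕ) :=
    sub_eq_of_eq_add' (Finset.sum_filter_add_sum_filter_not _ _ _).symm
  rw [← norm_toL2, ← norm_toL2, htail,
    norm_toL2_derivative_recon_sum_smul_psi p Fin.val_injective.injOn]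
  calc ‖toL2 (∑ j ∈ tail, c j • psi p (j : ℕ))‖
      ≤ 3 / (q + 1) * √(∑ j ∈ tail, c j ^ 2) :=
        norm_toL2_sum_smul_psi_le p Fin.val_injective.injOn (by simp [tail]) c
    _ ≤ 3 / (q + 1) * √(∑ j, c j ^ 2) := by
        gcongr
        exact Finset.filter_subset _ _
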